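/- arXiv:1212.2080 — 5 statements merged into one kernel-verified Lean document; each statement's English description precedes it below -/
import Mathlib

section
/- Let n, d ≥ 1 and let S be a collection of (n,d)-types that is closed under comparable intersections, i.e. whenever A, B ∈ S are such that for every i ∈ [n] either A_i ⊆ B_i or B_i ⊆ A_i, the type (A_1 ∩ B_1, …, A_n ∩ B_n) also belongs to S. Then S satisfies the elimination property — for all A, B ∈ S and every j ∈ [n] there exists C ∈ S with C_j = A_j ∪ B_j and C_k ∈ {A_k, B_k, A_k ∪ B_k} for all k ∈ [n] — if and only if for all A, B ∈ S the combinatorial convex hull S_{AB} is connected. -/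
/-- An `(n,d)`-type is an `n`-tuple of nonempty subsets of `[d]`, modelled as
`A : Fin n → Finset (Fin d)` with all entries nonempty. -/
def IsNDType {n d : ℕ} (A : Fin n → Finset (Fin d)) : Prop :=
  ∀ i, (A i).Nonempty

/-- Two types are incident if one is an entrywise subset of the other. -/
def Incident {n d : ℕ} (X Y : Fin n → Finset (Fin d)) : Prop :=
  (∀ i, X i ⊆ Y i) ∨ (∀ i, Y i ⊆ X i)

/-- The combinatorial convex hull `S_{AB}` of two types within a collection `S`. -/
def Hull {n d : ℕ} (S : Set (Fin n → Finset (Fin d)))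
    (A B : Fin n → Finset (Fin d)) : Set (Fin n → Finset (Fin d)) :=
  {C | C ∈ S ∧ ∀ i, C i = A i ∨ C i = B i ∨ C i = A i ∪ B i}

/-- `X` and `Y` are joined by a finite sequence of types in `S` in which consecutive
types are incident. -/
def ConnectedIn {n d : ℕ} (S : Set (Fin n → Finset (Fin d)))
    (X Y : Fin n → Finset (Fin d)) : Prop :=
  Relation.ReflTransGen (fun U V => U ∈ S ∧ V ∈ S ∧ Incident U V) X Y

/-!
Only the lattice structure of the entries matters, so the argument is carried out for families in
`ι → α` with `α` a lattice.

Elimination implies connectedness: induct on the set of coordinates at which `X` and `Y` are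
incomparable. If it is empty, `X` and `Y` are joined through `X ⊓ Y`. Otherwise eliminate at such a
coordinate `j` to get `C`; as `C j = X j ⊔ Y j` is comparable to both `X j` and `Y j`, the pairs
`X, C` and `C, Y` have fewer incomparable coordinates.

Connectedness implies elimination: along a path from `A` to `B` in their hull, the `j`-th entry
cannot switch from `A j` to `B j` without meeting `A j ⊔ B j`, since a direct switch happens
between comparable entries, one of which is then the join.
-/

section Definitions

variable {ι α : Type*}

/-- The combinatorial convex hull of `A` and `B` within `S`, for families with entries in a
join-semilattice. It specializes to `Hull` for entries in `Finset (Fin d)`. -/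
def joinHull [SemilatticeSup α] (S : Set (ι → α)) (A B : ι → α) : Set (ι → α) :=
  {C | C ∈ S ∧ ∀ i, C i ∈ ({A i, B i, A i ⊔ B i} : Set α)}

/-- `X` and `Y` are linked inside `T` by a finite sequence whose consecutive members are comparable.
It specializes to `ConnectedIn`, where comparability is incidence of types. As there, every `X` is
linked to itself, even outside `T`. -/
def ComparablyJoinedIn [LE α] (T : Set α) (X Y : α) : Prop :=
  Relation.ReflTransGen (fun U V => U ∈ T ∧ V ∈ T ∧ (U ≤ V ∨ V ≤ U)) X Y

/-- Closure under comparable intersections: `S` contains the meet of any two of its members that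
are comparable in each coordinate, possibly in different directions. -/
def ComparableInfClosed [SemilatticeInf α] (S : Set (ι → α)) : Prop :=
  ∀ A ∈ S, ∀ B ∈ S, (∀ i, A i ≤ B i ∨ B i ≤ A i) → A ⊓ B ∈ S

/-- The elimination property, for families with entries in a join-semilattice. -/
def HasElimination [SemilatticeSup α] (S : Set (ι → α)) : Prop :=
  ∀ A ∈ S, ∀ B ∈ S, ∀ j, ∃ C ∈ S, C j = A j ⊔ B j ∧
    ∀ k, C k ∈ ({A k, B k, A k ⊔ B k} : Set α)

/-- The coordinates at which `X` and `Y` are incomparable, which measure how far `X` and `Y` are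
from being joined through `X ⊓ Y`. -/
def incomparableCoords [LE α] (X Y : ι → α) : Set ι :=
  {i | IncompRel (· ≤ ·) (X i) (Y i)}

end Definitions

section PairWithJoin

variable {α : Type*} [SemilatticeSup α] {a b : α}

theorem supClosed_pair_sup (a b : α) : SupClosed ({a, b, a ⊔ b} : Set α) := by
  rintro x (rfl | rfl | rfl) y (rfl | rfl | rfl) <;> simp [sup_comm]

theorem isChain_pair_sup (h : a ≤ b ∨ b ≤ a) : IsChain (· ≤ ·) ({a, b, a ⊔ b} : Set α) := by
  rcases h with h | h <;>
    rintro x (rfl | rfl | rfl) y (rfl | rfl | rfl) _ <;> simp [h]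

end PairWithJoin

section JoinHull

variable {ι α : Type*} [SemilatticeSup α] {S : Set (ι → α)} {A B X Y : ι → α}

theorem left_mem_joinHull (hA : A ∈ S) : A ∈ joinHull S A B :=
  ⟨hA, fun _ => Or.inl rfl⟩

theorem right_mem_joinHull (hB : B ∈ S) : B ∈ joinHull S A B :=
  ⟨hB, fun _ => Or.inr (Or.inl rfl)⟩

theorem joinHull_subset (hX : X ∈ joinHull S A B) (hY : Y ∈ joinHull S A B) :
    joinHull S X Y ⊆ joinHull S A B := by
  rintro C ⟨hCS, hC⟩
  refine ⟨hCS, fun i => ?_⟩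
  have hsup := supClosed_pair_sup (A i) (B i) (hX.2 i) (hY.2 i)
  rcases hC i with h | h | h <;> rw [h]
  exacts [hX.2 i, hY.2 i, hsup]

theorem incomparableCoords_subset_of_mem_joinHull
    (hX : X ∈ joinHull S A B) (hY : Y ∈ joinHull S A B) :
    incomparableCoords X Y ⊆ incomparableCoords A B := by
  intro i hi
  contrapose! hi
  exact not_incompRel_iff_symmGen.2 <|
    (isChain_pair_sup (not_incompRel_iff_symmGen.1 hi)).total (hX.2 i) (hY.2 i)

theorem incomparableCoords_ssubset_of_mem_joinHull {j : ι}
    (hX : X ∈ joinHull S A B) (hY : Y ∈ joinHull S A B)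
    (hj : j ∈ incomparableCoords A B) (hXY : X j ≤ Y j ∨ Y j ≤ X j) :
    incomparableCoords X Y ⊂ incomparableCoords A B :=
  (Set.ssubset_iff_of_subset (incomparableCoords_subset_of_mem_joinHull hX hY)).2
    ⟨j, hj, not_incompRel_iff_symmGen.2 hXY⟩

end JoinHull

theorem ComparablyJoinedIn.mono {α : Type*} [LE α] {S T : Set α} {X Y : α} (hST : S ⊆ T)
    (h : ComparablyJoinedIn S X Y) : ComparablyJoinedIn T X Y :=
  Relation.ReflTransGen.mono (fun _ _ ⟨hU, hV, hUV⟩ => ⟨hST hU, hST hV, hUV⟩) X Y h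

section EliminationToConnectedness

variable {ι α : Type*} [Lattice α] {S : Set (ι → α)} {X Y : ι → α}

theorem inf_mem_joinHull (hS : ComparableInfClosed S) (hX : X ∈ S) (hY : Y ∈ S)
    (hXY : ∀ i, X i ≤ Y i ∨ Y i ≤ X i) : X ⊓ Y ∈ joinHull S X Y :=
  ⟨hS X hX Y hY hXY, fun i =>
    (hXY i).imp inf_eq_left.2 fun h => Or.inl (inf_eq_right.2 h)⟩

theorem comparablyJoinedIn_joinHull_of_forall_comparable (hS : ComparableInfClosed S)
    (hX : X ∈ S) (hY : Y ∈ S) (hXY : ∀ i, X i ≤ Y i ∨ Y i ≤ X i) :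
    ComparablyJoinedIn (joinHull S X Y) X Y :=
  have hinf := inf_mem_joinHull hS hX hY hXY
  .tail (.single ⟨left_mem_joinHull hX, hinf, Or.inr inf_le_left⟩)
    ⟨hinf, right_mem_joinHull hY, Or.inl inf_le_right⟩

theorem HasElimination.comparablyJoinedIn_joinHull [Finite ι] (hel : HasElimination S)
    (hS : ComparableInfClosed S) (hX : X ∈ S) (hY : Y ∈ S) :
    ComparablyJoinedIn (joinHull S X Y) X Y := by
  induction hI : incomparableCoords X Y using WellFoundedLT.induction generalizing X Y with
  | _ I ih =>
    subst hI
    rcases (incomparableCoords X Y).eq_empty_or_nonempty with hempty | ⟨j, hj⟩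
    · refine comparablyJoinedIn_joinHull_of_forall_comparable hS hX hY fun i => ?_
      exact not_incompRel_iff_symmGen.1 (Set.eq_empty_iff_forall_notMem.1 hempty i)
    · obtain ⟨C, hCS, hCj, hC⟩ := hel X hX Y hY j
      have hXH : X ∈ joinHull S X Y := left_mem_joinHull hX
      have hYH : Y ∈ joinHull S X Y := right_mem_joinHull hY
      have hCH : C ∈ joinHull S X Y := ⟨hCS, hC⟩
      have hXC : ComparablyJoinedIn (joinHull S X C) X C :=
        ih _ (incomparableCoords_ssubset_of_mem_joinHull hXH hCH hj
          (Or.inl (hCj ▸ le_sup_left))) hX hCS rfl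
      have hCY : ComparablyJoinedIn (joinHull S C Y) C Y :=
        ih _ (incomparableCoords_ssubset_of_mem_joinHull hCH hYH hj
          (Or.inr (hCj ▸ le_sup_right))) hCS hY rfl
      exact (hXC.mono (joinHull_subset hXH hCH)).trans (hCY.mono (joinHull_subset hCH hYH))

end EliminationToConnectedness

section ConnectednessToElimination

variable {ι α : Type*} [SemilatticeSup α] {S : Set (ι → α)} {A B X : ι → α}

theorem ComparablyJoinedIn.exists_apply_eq_sup_or_apply_eq
    (h : ComparablyJoinedIn (joinHull S A B) A X) (j : ι) :
    (∃ C ∈ joinHull S A B, C j = A j ⊔ B j) ∨ X j = A j := by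
  induction h with
  | refl => exact Or.inr rfl
  | @tail U V _ hUV ih =>
    obtain ⟨hU, hV, hcomp⟩ := hUV
    refine ih.elim Or.inl fun hUA => ?_
    rcases hV.2 j with hVA | hVB | hVsup
    · exact Or.inr hVA
    · have hAB : A j ≤ B j ∨ B j ≤ A j := by
        rw [← hUA, ← hVB]
        exact hcomp.imp (· j) (· j)
      rcases hAB with hle | hle
      · exact Or.inl ⟨V, hV, hVB.trans (sup_eq_right.2 hle).symm⟩
      · exact Or.inl ⟨U, hU, hUA.trans (sup_eq_left.2 hle).symm⟩
    · exact Or.inl ⟨V, hV, hVsup⟩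

theorem ComparablyJoinedIn.exists_apply_eq_sup (hA : A ∈ S)
    (h : ComparablyJoinedIn (joinHull S A B) A B) (j : ι) :
    ∃ C ∈ joinHull S A B, C j = A j ⊔ B j :=
  (h.exists_apply_eq_sup_or_apply_eq j).elim id fun hBA =>
    ⟨A, left_mem_joinHull hA, by rw [hBA, sup_idem]⟩

end ConnectednessToElimination

theorem stmt_0_general {ι α : Type*} [Finite ι] [Lattice α] {S : Set (ι → α)}
    (hS : ComparableInfClosed S) :
    HasElimination S ↔ ∀ A ∈ S, ∀ B ∈ S, ∀ X ∈ joinHull S A B, ∀ Y ∈ joinHull S A B,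
      ComparablyJoinedIn (joinHull S A B) X Y := by
  constructor
  · intro hel A _ B _ X hX Y hY
    exact (hel.comparablyJoinedIn_joinHull hS hX.1 hY.1).mono (joinHull_subset hX hY)
  · intro hconn A hA B hB j
    have hAB := hconn A hA B hB A (left_mem_joinHull hA) B (right_mem_joinHull hB)
    obtain ⟨C, ⟨hCS, hC⟩, hCj⟩ := hAB.exists_apply_eq_sup hA j
    exact ⟨C, hCS, hCj, hC⟩

theorem stmt_0 (n d : ℕ) (hn : 1 ≤ n) (hd : 1 ≤ d)
    (S : Set (Fin n → Finset (Fin d)))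
    (htypes : ∀ A ∈ S, IsNDType A)
    (hclosed : ∀ A ∈ S, ∀ B ∈ S,
      (∀ i, A i ⊆ B i ∨ B i ⊆ A i) → (fun i => A i ∩ B i) ∈ S) :
    (∀ A ∈ S, ∀ B ∈ S, ∀ j : Fin n, ∃ C ∈ S, C j = A j ∪ B j ∧
        ∀ k, C k = A k ∨ C k = B k ∨ C k = A k ∪ B k)
    ↔ (∀ A ∈ S, ∀ B ∈ S, ∀ X ∈ Hull S A B, ∀ Y ∈ Hull S A B,
        ConnectedIn (Hull S A B) X Y) :=
  stmt_0_general hclosed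
end

section
/- Let A, B, C be (n,d)-types such that C_k ∈ {A_k, B_k, A_k ∪ B_k} for all k ∈ [n] and C_j = A_j ∪ B_j for a fixed j ∈ [n]. Define dist(A,B) = {i ∈ [n] : A_i ⊄ B_i and B_i ⊄ A_i}. Then dist(A,C) ⊆ dist(A,B) \ {j} and dist(B,C) ⊆ dist(A,B) \ {j}; in particular |dist(A,C)| ≤ |dist(A,B)| − 1 and |dist(B,C)| ≤ |dist(A,B)| − 1 whenever j ∈ dist(A,B). -/
/-- `dist(A,B)` is the set of positions where the entries of `A` and `B` are
incomparable. -/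
def typeDist {n d : ℕ} (A B : Fin n → Finset (Fin d)) : Finset (Fin n) :=
  Finset.univ.filter (fun i => ¬ A i ⊆ B i ∧ ¬ B i ⊆ A i)

theorem card_le_card_sub_one_of_subset_sdiff_singleton {ι : Type*} [DecidableEq ι]
    {s t : Finset ι} {j : ι} (hst : s ⊆ t \ {j}) (hj : j ∈ t) : s.card ≤ t.card - 1 := by
  rw [← Finset.card_erase_of_mem hj, ← Finset.sdiff_singleton_eq_erase]
  exact Finset.card_le_card hst

/-- The positions at which two tuples have incomparable entries: `dist(A, B)` for tuples with
entries in an arbitrary preorder. -/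
def incompPositions {ι α : Type*} [Fintype ι] [Preorder α] [DecidableLE α] (a b : ι → α) :
    Finset ι :=
  Finset.univ.filter fun i => IncompRel (· ≤ ·) (a i) (b i)

/-- `c` is an elimination of `a` and `b` at position `j`, for tuples with entries in a join
semilattice; for types the join is the union. -/
structure IsElimination {ι α : Type*} [SemilatticeSup α] (a b c : ι → α) (j : ι) : Prop where
  eq_or_eq_or_eq_sup : ∀ k, c k = a k ∨ c k = b k ∨ c k = a k ⊔ b k
  eq_sup : c j = a j ⊔ b j

section Preorder

variable {ι α : Type*} [Fintype ι] [Preorder α] [DecidableLE α] {a b c : ι → α} {i : ι}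

theorem mem_incompPositions : i ∈ incompPositions a b ↔ IncompRel (· ≤ ·) (a i) (b i) := by
  simp only [incompPositions, Finset.mem_filter_univ]

theorem incompPositions_comm (a b : ι → α) : incompPositions a b = incompPositions b a := by
  ext i
  rw [mem_incompPositions, mem_incompPositions, incompRel_comm]

theorem notMem_incompPositions_of_le (h : a i ≤ b i) : i ∉ incompPositions a b :=
  fun hi => (mem_incompPositions.mp hi).1 h

theorem incompPositions_subset_of_le_or_eq (h : ∀ k, a k ≤ c k ∨ c k = b k) :
    incompPositions a c ⊆ incompPositions a b := by
  intro i hi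
  rcases h i with hle | heq
  · exact absurd hi (notMem_incompPositions_of_le hle)
  · rw [mem_incompPositions] at hi ⊢
    rwa [← heq]

end Preorder

namespace IsElimination

variable {ι α : Type*} [SemilatticeSup α] {a b c : ι → α} {j : ι}

theorem symm (h : IsElimination a b c j) : IsElimination b a c j where
  eq_or_eq_or_eq_sup k := by
    rw [sup_comm, or_left_comm]
    exact h.eq_or_eq_or_eq_sup k
  eq_sup := by rw [sup_comm, h.eq_sup]

theorem left_le_or_eq_right (h : IsElimination a b c j) (k : ι) : a k ≤ c k ∨ c k = b k := by
  rcases h.eq_or_eq_or_eq_sup k with hca | hcb | hsup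
  · exact .inl hca.ge
  · exact .inr hcb
  · exact .inl (le_sup_left.trans_eq hsup.symm)

theorem left_le (h : IsElimination a b c j) : a j ≤ c j :=
  le_sup_left.trans_eq h.eq_sup.symm

variable [Fintype ι] [DecidableEq ι] [DecidableLE α]

theorem incompPositions_left_subset (h : IsElimination a b c j) :
    incompPositions a c ⊆ incompPositions a b \ {j} := by
  have subset_erase : incompPositions a c ⊆ (incompPositions a b).erase j :=
    Finset.subset_erase.mpr ⟨incompPositions_subset_of_le_or_eq h.left_le_or_eq_right,
      notMem_incompPositions_of_le h.left_le⟩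
  rwa [Finset.sdiff_singleton_eq_erase]

theorem incompPositions_right_subset (h : IsElimination a b c j) :
    incompPositions b c ⊆ incompPositions a b \ {j} := by
  rw [incompPositions_comm a b]
  exact h.symm.incompPositions_left_subset

end IsElimination

theorem stmt_1_general {ι α : Type*} [Fintype ι] [DecidableEq ι] [SemilatticeSup α]
    [DecidableLE α] {a b c : ι → α} {j : ι} (h : IsElimination a b c j) :
    incompPositions a c ⊆ incompPositions a b \ {j} ∧
    incompPositions b c ⊆ incompPositions a b \ {j} ∧
    (j ∈ incompPositions a b →
      (incompPositions a c).card ≤ (incompPositions a b).card - 1 ∧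
      (incompPositions b c).card ≤ (incompPositions a b).card - 1) :=
  ⟨h.incompPositions_left_subset, h.incompPositions_right_subset, fun hj =>
    ⟨card_le_card_sub_one_of_subset_sdiff_singleton h.incompPositions_left_subset hj,
      card_le_card_sub_one_of_subset_sdiff_singleton h.incompPositions_right_subset hj⟩⟩

theorem typeDist_eq_incompPositions {n d : ℕ} (A B : Fin n → Finset (Fin d)) :
    typeDist A B = incompPositions A B :=
  rfl

theorem stmt_1 {n d : ℕ} (A B C : Fin n → Finset (Fin d)) (j : Fin n)
    (hA : ∀ i, (A i).Nonempty) (hB : ∀ i, (B i).Nonempty) (hC : ∀ i, (C i).Nonempty)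
    (hCk : ∀ k, C k = A k ∨ C k = B k ∨ C k = A k ∪ B k)
    (hCj : C j = A j ∪ B j) :
    typeDist A C ⊆ typeDist A B \ {j} ∧
    typeDist B C ⊆ typeDist A B \ {j} ∧
    (j ∈ typeDist A B →
      (typeDist A C).card ≤ (typeDist A B).card - 1 ∧
      (typeDist B C).card ≤ (typeDist A B).card - 1) := by
  simp only [typeDist_eq_incompPositions]
  exact stmt_1_general ⟨hCk, hCj⟩
end

section
/- Let d ≥ 2, let p ∈ ℝ^d have pairwise distinct coordinates, let i ∈ [d], and let J be a nonempty subset of [d]. Then T_J ∩ H_{i,p}^+ ≠ ∅ if and only if p_j < p_i for every j ∈ J \ {i}. -/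
/-- `m(x) = min_l x_l`, the minimum coordinate of `x`. -/
noncomputable def minCoord {d : ℕ} (x : Fin d → ℝ) : ℝ := sInf (Set.range x)

/-- `T_J`: the set of points of type `J` with respect to the tropical (min-plus)
hyperplane with apex `0`. -/
noncomputable def tropType {d : ℕ} (J : Finset (Fin d)) : Set (Fin d → ℝ) :=
  {x | {k | x k = minCoord x} = (J : Set (Fin d))}

/-- `H_{i,p}^+`: the open sector of the tropical hyperplane with apex `p`
corresponding to coordinate `i`. -/
def openSector {d : ℕ} (i : Fin d) (p : Fin d → ℝ) : Set (Fin d → ℝ) :=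
  {x | ∀ j, j ≠ i → x i - p i < x j - p j}

/-!
If `x` has type `J` and lies in the sector of `i`, then `x j ≤ x i` for `j ∈ J`, and the sector
inequality `x i - p i < x j - p j` forces `p j < p i`. Conversely, choose a threshold `c` below
`p i` and above the other coordinates `p j`, `j ∈ J`. A point that vanishes on `J`, takes the value
`p i - c` at `i` if `i ∉ J`, and is large elsewhere satisfies `x i - p i ≤ -c < x j - p j`
for all `j ≠ i`.
-/

theorem exists_lt_forall_mem_lt {ι α : Type*} [LinearOrder α] [DenselyOrdered α] [NoMinOrder α]
    {s : Finset ι} {f : ι → α} {b : α} (h : ∀ j ∈ s, f j < b) : ∃ c < b, ∀ j ∈ s, f j < c := by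
  obtain rfl | hs := s.eq_empty_or_nonempty
  · obtain ⟨c, hc⟩ := exists_lt b
    exact ⟨c, hc, by simp⟩
  · obtain ⟨c, hsup, hc⟩ := exists_between ((Finset.sup'_lt_iff hs).2 h)
    exact ⟨c, hc, (Finset.sup'_lt_iff hs).1 hsup⟩

section

variable {d : ℕ} {x p : Fin d → ℝ} {i : Fin d} {J : Finset (Fin d)} {c : ℝ}

theorem minCoord_le (x : Fin d → ℝ) (k : Fin d) : minCoord x ≤ x k :=
  csInf_le (Set.finite_range x).bddBelow (Set.mem_range_self k)

theorem eq_minCoord_iff {k : Fin d} : x k = minCoord x ↔ ∀ l, x k ≤ x l := by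
  refine ⟨fun hk l => hk.trans_le (minCoord_le x l), fun hk => ?_⟩
  have hleast : IsLeast (Set.range x) (x k) := ⟨Set.mem_range_self k, Set.forall_mem_range.2 hk⟩
  exact hleast.csInf_eq.symm

theorem mem_tropType_iff : x ∈ tropType J ↔ ∀ k, k ∈ J ↔ ∀ l, x k ≤ x l := by
  simp only [tropType, Set.mem_ofPred_eq, Set.ext_iff, eq_minCoord_iff, Finset.mem_coe]
  exact forall_congr' fun _ => iff_comm

theorem indicator_compl_mem_tropType (hJ : J.Nonempty) {f : Fin d → ℝ} (hf : ∀ k ∉ J, 0 < f k) :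
    (J : Set (Fin d))ᶜ.indicator f ∈ tropType J := by
  refine mem_tropType_iff.2 fun k => ⟨fun hk l => ?_, fun hk => ?_⟩
  · rw [Set.indicator_of_notMem (Set.notMem_compl_iff.2 hk)]
    exact Set.indicator_nonneg (fun l hl => (hf l hl).le) l
  · obtain ⟨j, hj⟩ := hJ
    by_contra hkJ
    have hkj := hk j
    rw [Set.indicator_of_mem (Set.mem_compl hkJ),
      Set.indicator_of_notMem (Set.notMem_compl_iff.2 hj)] at hkj
    exact (hf k hkJ).not_ge hkj

theorem lt_of_mem_tropType_of_mem_openSector (hxJ : x ∈ tropType J) (hxi : x ∈ openSector i p)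
    {j : Fin d} (hj : j ∈ J) (hji : j ≠ i) : p j < p i := by
  have hle : x j ≤ x i := (mem_tropType_iff.1 hxJ j).1 hj i
  have hlt : x i - p i < x j - p j := hxi j hji
  linarith

/-- Heights relative to a threshold `c < p i`: `p i - c` at `i`, and strictly above both `0` and
`p k - c` at every other `k`. Setting them to zero on `J` gives a point of type `J` in the sector
of `i`. -/
noncomputable def thresholdHeight (p : Fin d → ℝ) (i : Fin d) (c : ℝ) : Fin d → ℝ :=
  Function.update (fun k => max (p k - c) 0 + 1) i (p i - c)

theorem thresholdHeight_self : thresholdHeight p i c i = p i - c :=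
  Function.update_self ..

theorem thresholdHeight_of_ne {k : Fin d} (hk : k ≠ i) :
    thresholdHeight p i c k = max (p k - c) 0 + 1 :=
  Function.update_of_ne hk ..

theorem thresholdHeight_pos (hc : c < p i) (k : Fin d) : 0 < thresholdHeight p i c k := by
  obtain rfl | hk := eq_or_ne k i
  · rw [thresholdHeight_self]
    exact sub_pos.2 hc
  · rw [thresholdHeight_of_ne hk]
    positivity

theorem indicator_compl_thresholdHeight_mem_openSector (hc : c < p i)
    (hJc : ∀ j ∈ J.erase i, p j < c) :
    (J : Set (Fin d))ᶜ.indicator (thresholdHeight p i c) ∈ openSector i p := by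
  intro j hji
  have hi : (J : Set (Fin d))ᶜ.indicator (thresholdHeight p i c) i ≤ p i - c :=
    (Set.indicator_le_self' (fun _ _ => (thresholdHeight_pos hc _).le) i).trans_eq
      thresholdHeight_self
  have hj : p j - c < (J : Set (Fin d))ᶜ.indicator (thresholdHeight p i c) j := by
    by_cases hjJ : j ∈ J
    · rw [Set.indicator_of_notMem (Set.notMem_compl_iff.2 hjJ)]
      exact sub_neg.2 (hJc j (Finset.mem_erase.2 ⟨hji, hjJ⟩))
    · rw [Set.indicator_of_mem (Set.mem_compl hjJ), thresholdHeight_of_ne hji]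
      exact (le_max_left _ _).trans_lt (lt_add_one _)
  linarith

end

theorem stmt_7_general {d : ℕ} (p : Fin d → ℝ) (i : Fin d) (J : Finset (Fin d))
    (hJ : J.Nonempty) :
    (tropType J ∩ openSector i p).Nonempty ↔ ∀ j ∈ J, j ≠ i → p j < p i := by
  constructor
  · rintro ⟨x, hxJ, hxi⟩ j hj hji
    exact lt_of_mem_tropType_of_mem_openSector hxJ hxi hj hji
  · intro h
    obtain ⟨c, hc, hJc⟩ : ∃ c < p i, ∀ j ∈ J.erase i, p j < c :=
      exists_lt_forall_mem_lt fun j hj =>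
        h j (Finset.mem_of_mem_erase hj) (Finset.ne_of_mem_erase hj)
    exact ⟨_, indicator_compl_mem_tropType hJ fun k _ => thresholdHeight_pos hc k,
      indicator_compl_thresholdHeight_mem_openSector hc hJc⟩

theorem stmt_7 {d : ℕ} (hd : 2 ≤ d) (p : Fin d → ℝ)
    (hp : Function.Injective p) (i : Fin d) (J : Finset (Fin d)) (hJ : J.Nonempty) :
    (tropType J ∩ openSector i p).Nonempty ↔ ∀ j ∈ J, j ≠ i → p j < p i :=
  stmt_7_general p i J hJ
end

section
/- Let d ≥ 2 and let ≺ be a linear order on [d]. For i ∈ [d] define C(i,≺) = {J ⊆ [d] : J ≠ ∅, i ∈ J, and J ⊆ {i} ∪ {q ∈ [d] : q ≺ i}}, and for L ⊆ [d] define C(L,≺) = ⋃_{i∈L} C(i,≺). Then for all nonempty proper subsets I, J of [d] and every nonempty K ⊆ [d] with K ∉ {I, J, I ∪ J}, there exist a nonempty subset L ⊆ [d] and a linear order ≺ on [d] such that I ∈ C(L,≺), J ∈ C(L,≺), I ∪ J ∈ C(L,≺), and K ∉ C(L,≺). -/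
/-- `C(i,≺)`: the nonempty subsets `J` of `[d]` with `i ∈ J` and
`J ⊆ {i} ∪ {q : q ≺ i}`. -/
def sectorTypes {d : ℕ} (i : Fin d) (lt : Fin d → Fin d → Prop) :
    Set (Finset (Fin d)) :=
  {J | J.Nonempty ∧ i ∈ J ∧ ∀ q ∈ J, q ≠ i → lt q i}

/-- `C(L,≺) = ⋃_{i ∈ L} C(i,≺)`. -/
def halfspaceTypes {d : ℕ} (L : Finset (Fin d)) (lt : Fin d → Fin d → Prop) :
    Set (Finset (Fin d)) :=
  ⋃ i ∈ L, sectorTypes i lt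

/-!
For a strict total order `≺`, a nonempty set lies in exactly one sector `C(i, ≺)`, the one indexed
by its `≺`-maximum. So every `C(L, ≺)` is closed under unions, and `C([d] \ {k}, ≺)` consists of
the nonempty sets whose maximum is not `k`.

If `K` is not a union of members of a family `F`, some `k ∈ K` lies in no member of `F` contained
in `K`. Choose `≺` with `K \ {k} ≺ k ≺ [d] \ K`: then `k` is the maximum of `K`, and any set with
maximum `k` is contained in `K`, so it is not in `F`. Hence `C([d] \ {k}, ≺)` contains `F`, together
with all unions of its members, but not `K`. The theorem is the case `F = {I, J}`.
-/

section SupClosure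

variable {α : Type*}

theorem supClosure_pair [SemilatticeSup α] (a b : α) :
    supClosure {a, b} = ({a, b, a ⊔ b} : Set α) := by
  refine (supClosure_min (by grind) ?_).antisymm ?_
  · rintro x (rfl | rfl | rfl) y (rfl | rfl | rfl) <;> simp [sup_comm]
  · rintro x (rfl | rfl | rfl)
    · exact subset_supClosure (by simp)
    · exact subset_supClosure (by simp)
    · exact sup_mem_supClosure (by simp) (by simp)

theorem exists_mem_forall_subset_notMem_of_notMem_supClosure [DecidableEq α]
    {F : Set (Finset α)} {K : Finset α} (hK : K.Nonempty) (hKF : K ∉ supClosure F) :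
    ∃ k ∈ K, ∀ A ∈ F, A ⊆ K → k ∉ A := by
  contrapose! hKF
  choose! A hAF hAK hkA using hKF
  have hK_eq : K.sup' hK A = K :=
    (Finset.sup'_le hK A hAK).antisymm fun k hk ↦ Finset.le_sup' A hk (hkA k hk)
  exact hK_eq ▸ finsetSup'_mem_supClosure hK hAF

end SupClosure

section StrictTotalOrder

variable {α : Type*}

theorem exists_isStrictTotalOrder_of_lt {β : Type*} [LinearOrder β] (f : α → β) :
    ∃ lt : α → α → Prop, IsStrictTotalOrder α lt ∧ ∀ x y, f x < f y → lt x y := by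
  classical
  let _ : LinearOrder α := linearOrderOfSTO WellOrderingRel
  let e : α ↪ β ×ₗ α := ⟨fun x ↦ toLex (f x, x), fun _ _ h ↦ congrArg (fun p ↦ (ofLex p).2) h⟩
  exact ⟨e ⁻¹'o (· < ·), (RelEmbedding.preimage e (· < ·)).isStrictTotalOrder,
    fun _ _ h ↦ Prod.Lex.left _ _ h⟩

theorem exists_isStrictTotalOrder_forall_mem_lt_forall_notMem_lt {s : Set α} {a : α} (ha : a ∈ s) :
    ∃ lt : α → α → Prop, IsStrictTotalOrder α lt ∧
      (∀ x ∈ s, x ≠ a → lt x a) ∧ ∀ x ∉ s, lt a x := by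
  classical
  let rank (x : α) : ℕ := if x = a then 1 else if x ∈ s then 0 else 2
  obtain ⟨lt, hlt, lt_of_rank_lt⟩ := exists_isStrictTotalOrder_of_lt rank
  refine ⟨lt, hlt, fun x hx hxa ↦ lt_of_rank_lt x a ?_, fun x hx ↦ lt_of_rank_lt a x ?_⟩
  · simp [rank, hx, hxa]
  · simp [rank, hx, (ne_of_mem_of_not_mem ha hx).symm]

end StrictTotalOrder

section Types

variable {d : ℕ} {lt : Fin d → Fin d → Prop} {i j k : Fin d} {A B L : Finset (Fin d)}

theorem mem_sectorTypes : A ∈ sectorTypes i lt ↔ i ∈ A ∧ ∀ q ∈ A, q ≠ i → lt q i :=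
  and_iff_right_of_imp fun h ↦ ⟨i, h.1⟩

theorem mem_halfspaceTypes : A ∈ halfspaceTypes L lt ↔ ∃ i ∈ L, A ∈ sectorTypes i lt := by
  simp only [halfspaceTypes, Set.mem_iUnion, exists_prop]

theorem mem_sectorTypes_of_subset (hB : B ∈ sectorTypes i lt) (hAB : A ⊆ B) (hi : i ∈ A) :
    A ∈ sectorTypes i lt :=
  mem_sectorTypes.2 ⟨hi, fun q hq ↦ (mem_sectorTypes.1 hB).2 q (hAB hq)⟩

theorem eq_of_mem_sectorTypes [Std.Asymm lt] (hi : A ∈ sectorTypes i lt)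
    (hj : A ∈ sectorTypes j lt) : i = j := by
  rw [mem_sectorTypes] at hi hj
  by_contra hij
  exact asymm_of lt (hj.2 i hi.1 hij) (hi.2 j hj.1 (Ne.symm hij))

theorem exists_mem_sectorTypes [IsStrictTotalOrder (Fin d) lt] (hA : A.Nonempty) :
    ∃ i, A ∈ sectorTypes i lt := by
  obtain ⟨i, hi, hmax⟩ :=
    (Finite.wellFounded_of_trans_of_irrefl (Function.swap lt)).has_min (A : Set (Fin d)) hA
  refine ⟨i, mem_sectorTypes.2 ⟨hi, fun q hq hqi ↦ ?_⟩⟩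
  exact (trichotomous_of lt q i).resolve_right (not_or.2 ⟨hqi, hmax q hq⟩)

theorem supClosed_halfspaceTypes [IsStrictTotalOrder (Fin d) lt] :
    SupClosed (halfspaceTypes L lt) := by
  intro A hA B hB
  obtain ⟨a, haL, ha⟩ := mem_halfspaceTypes.1 hA
  obtain ⟨b, hbL, hb⟩ := mem_halfspaceTypes.1 hB
  have hAB : (A ∪ B).Nonempty := ha.1.mono Finset.subset_union_left
  obtain ⟨i, hi⟩ := exists_mem_sectorTypes (lt := lt) hAB
  refine mem_halfspaceTypes.2 ⟨i, ?_, hi⟩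
  rcases Finset.mem_union.1 (mem_sectorTypes.1 hi).1 with hiA | hiB
  · have hAi := mem_sectorTypes_of_subset hi Finset.subset_union_left hiA
    exact eq_of_mem_sectorTypes ha hAi ▸ haL
  · have hBi := mem_sectorTypes_of_subset hi Finset.subset_union_right hiB
    exact eq_of_mem_sectorTypes hb hBi ▸ hbL

theorem mem_halfspaceTypes_univ_erase [IsStrictTotalOrder (Fin d) lt] :
    A ∈ halfspaceTypes (Finset.univ.erase k) lt ↔ A.Nonempty ∧ A ∉ sectorTypes k lt := by
  simp only [mem_halfspaceTypes, Finset.mem_erase, Finset.mem_univ, and_true]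
  constructor
  · rintro ⟨i, hik, hi⟩
    exact ⟨hi.1, fun hk ↦ hik (eq_of_mem_sectorTypes hi hk)⟩
  · rintro ⟨hA, hk⟩
    obtain ⟨i, hi⟩ := exists_mem_sectorTypes (lt := lt) hA
    exact ⟨i, fun hik ↦ hk (hik ▸ hi), hi⟩

theorem subset_of_mem_sectorTypes [Std.Asymm lt] (hA : A ∈ sectorTypes k lt) (hk : k ∈ B)
    (hB : ∀ q ∉ B, lt k q) : A ⊆ B := by
  intro q hqA
  by_contra hqB
  have hqk : q ≠ k := (ne_of_mem_of_not_mem hk hqB).symm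
  exact asymm_of lt (hB q hqB) ((mem_sectorTypes.1 hA).2 q hqA hqk)

end Types

theorem stmt_10_general {d : ℕ} {F : Set (Finset (Fin d))} {K : Finset (Fin d)}
    (hF : F.Nonempty) (hF_nonempty : ∀ A ∈ F, A.Nonempty) (hK : K.Nonempty)
    (hKF : K ∉ supClosure F) :
    ∃ (L : Finset (Fin d)) (lt : Fin d → Fin d → Prop),
      L.Nonempty ∧ IsStrictTotalOrder (Fin d) lt ∧
      supClosure F ⊆ halfspaceTypes L lt ∧ K ∉ halfspaceTypes L lt := by
  obtain ⟨k, hkK, hkF⟩ := exists_mem_forall_subset_notMem_of_notMem_supClosure hK hKF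
  obtain ⟨lt, hlt, lt_k, k_lt⟩ :=
    exists_isStrictTotalOrder_forall_mem_lt_forall_notMem_lt (s := (K : Set (Fin d))) hkK
  have hKk : K ∈ sectorTypes k lt := mem_sectorTypes.2 ⟨hkK, lt_k⟩
  have hFL : F ⊆ halfspaceTypes (Finset.univ.erase k) lt := fun A hA ↦
    mem_halfspaceTypes_univ_erase.2 ⟨hF_nonempty A hA, fun hAk ↦
      hkF A hA (subset_of_mem_sectorTypes hAk hkK k_lt) (mem_sectorTypes.1 hAk).1⟩
  obtain ⟨A, hA⟩ := hF
  obtain ⟨i, hiL, -⟩ := mem_halfspaceTypes.1 (hFL hA)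
  exact ⟨Finset.univ.erase k, lt, ⟨i, hiL⟩, hlt, supClosure_min hFL supClosed_halfspaceTypes,
    fun hKL ↦ (mem_halfspaceTypes_univ_erase.1 hKL).2 hKk⟩

theorem stmt_10 {d : ℕ} (hd : 2 ≤ d)
    (I J K : Finset (Fin d))
    (hI : I.Nonempty) (hI' : I ≠ Finset.univ)
    (hJ : J.Nonempty) (hJ' : J ≠ Finset.univ)
    (hK : K.Nonempty) (hKI : K ≠ I) (hKJ : K ≠ J) (hKIJ : K ≠ I ∪ J) :
    ∃ (L : Finset (Fin d)) (lt : Fin d → Fin d → Prop),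
      L.Nonempty ∧ IsStrictTotalOrder (Fin d) lt ∧
      I ∈ halfspaceTypes L lt ∧ J ∈ halfspaceTypes L lt ∧
      I ∪ J ∈ halfspaceTypes L lt ∧ K ∉ halfspaceTypes L lt := by
  have hK_notMem : K ∉ supClosure {I, J} := by simp [supClosure_pair, hKI, hKJ, hKIJ]
  simpa [supClosure_pair, Set.insert_subset_iff, and_assoc] using
    stmt_10_general (Set.insert_nonempty I {J}) (by simp [hI, hJ]) hK hK_notMem
end

section
/- Let d ≥ 2 and let I be a nonempty proper subset of [d]. Consider f : ℝ^d → ℝ given by f(x) = min_{i∈I} x_i − min_{k∉I} x_k, and the open tropical halfspace U = {x ∈ ℝ^d : f(x) < 0}. Then the topological frontier of U equals W = {x ∈ ℝ^d : min_{i∈I} x_i = min_{k∉I} x_k}, the complement ℝ^d \ W has exactly the two connected components U = {f < 0} and {f > 0}, both nonempty and open, and W is homeomorphic to ℝ^{d−1}. -/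
/-!
Adding `t` to the coordinates in `I` adds `t` to `f`. So every line in the direction `𝟙_I` is mapped
bijectively onto `ℝ` by `f`, and points can be slid along these lines, continuously, to any
prescribed level of `f`. Hence `f` is open, which computes the frontier, and preimages of connected
sets are connected. The coordinate `x i₀` with `i₀ ∈ I` grows in the same way along the same lines,
so sliding identifies `{f = 0}` with the coordinate hyperplane `{x i₀ = 0}`.
-/

section Equivariant

variable {R E : Type*} [Ring R] [AddCommGroup E] [Module R E] {f g : E → R} {v : E}

/-- The function `f` restricts to a translation on every line in the direction `v`, that is, it is
equivariant for the action of `R` on `E` by translation along `v`. -/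
def IsEquivariantAlong (f : E → R) (v : E) : Prop :=
  ∀ x t, f (x + t • v) = f x + t

/-- The point at which `f` takes the value `c` on the line through `x` in the direction `v`, for `f`
equivariant along `v`. -/
def moveToLevel (f : E → R) (v x : E) (c : R) : E :=
  x + (c - f x) • v

@[simp]
lemma moveToLevel_self (f : E → R) (v x : E) : moveToLevel f v x (f x) = x := by
  simp [moveToLevel]

lemma continuous_moveToLevel [TopologicalSpace R] [IsTopologicalAddGroup R] [TopologicalSpace E]
    [ContinuousAdd E] [ContinuousSMul R E] (hf : Continuous f) (v : E) :
    Continuous fun p : E × R ↦ moveToLevel f v p.1 p.2 := by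
  unfold moveToLevel
  fun_prop

namespace IsEquivariantAlong

lemma apply_moveToLevel (hf : IsEquivariantAlong f v) (x : E) (c : R) :
    f (moveToLevel f v x c) = c := by
  rw [moveToLevel, hf, add_sub_cancel]

lemma moveToLevel_moveToLevel (hf : IsEquivariantAlong f v) (g : E → R) (x : E) (b c : R) :
    moveToLevel f v (moveToLevel g v x b) c = moveToLevel f v x c := by
  have hcoeff : b - g x + (c - (f x + (b - g x))) = c - f x := by abel
  simp only [moveToLevel, hf x, add_assoc, ← add_smul, hcoeff]

lemma preimage_eq_image_moveToLevel (hf : IsEquivariantAlong f v) (S : Set R) :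
    f ⁻¹' S = (fun p : E × R ↦ moveToLevel f v p.1 p.2) '' Set.univ ×ˢ S := by
  ext x
  constructor
  · exact fun hx ↦ ⟨(x, f x), ⟨trivial, hx⟩, moveToLevel_self f v x⟩
  · rintro ⟨⟨y, c⟩, ⟨-, hc⟩, rfl⟩
    simpa only [Set.mem_preimage, hf.apply_moveToLevel] using hc

variable [TopologicalSpace R] [IsTopologicalAddGroup R] [TopologicalSpace E] [ContinuousAdd E]
  [ContinuousSMul R E]

lemma isConnected_preimage [ConnectedSpace E] (hf : IsEquivariantAlong f v) (hfc : Continuous f)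
    {S : Set R} (hS : IsConnected S) : IsConnected (f ⁻¹' S) := by
  rw [hf.preimage_eq_image_moveToLevel]
  exact (isConnected_univ.prod hS).image _ (continuous_moveToLevel hfc v).continuousOn

lemma isOpenMap (hf : IsEquivariantAlong f v) (hfc : Continuous f) : IsOpenMap f :=
  IsOpenMap.of_sections fun x ↦ ⟨moveToLevel f v x,
    ((continuous_moveToLevel hfc v).comp (.prodMk_right x)).continuousAt,
    moveToLevel_self f v x, hf.apply_moveToLevel x⟩

lemma frontier_setOf_lt [LinearOrder R] [OrderTopology R] [DenselyOrdered R] [NoMinOrder R]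
    (hf : IsEquivariantAlong f v) (hfc : Continuous f) (a : R) :
    frontier {x | f x < a} = {x | f x = a} :=
  calc frontier (f ⁻¹' Set.Iio a) = f ⁻¹' frontier (Set.Iio a) :=
        ((hf.isOpenMap hfc).preimage_frontier_eq_frontier_preimage hfc _).symm
    _ = f ⁻¹' {a} := by rw [frontier_Iio]

/-- Level sets of two functions that are equivariant along the same vector are homeomorphic, by
moving points along the common direction. -/
def levelSetHomeomorph (hf : IsEquivariantAlong f v) (hg : IsEquivariantAlong g v)
    (hfc : Continuous f) (hgc : Continuous g) (a b : R) : {x | f x = a} ≃ₜ {x | g x = b} where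
  toFun x := ⟨moveToLevel g v x b, hg.apply_moveToLevel x b⟩
  invFun y := ⟨moveToLevel f v y a, hf.apply_moveToLevel y a⟩
  left_inv := by
    rintro ⟨x, rfl⟩
    simp [hf.moveToLevel_moveToLevel]
  right_inv := by
    rintro ⟨y, rfl⟩
    simp [hg.moveToLevel_moveToLevel]
  continuous_toFun := by
    have := continuous_moveToLevel hgc v
    fun_prop
  continuous_invFun := by
    have := continuous_moveToLevel hfc v
    fun_prop

end IsEquivariantAlong

end Equivariant

section Coordinates

variable {ι : Type*}

lemma isEquivariantAlong_apply {R : Type*} [Ring R] {i : ι} {v : ι → R} (hv : v i = 1) :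
    IsEquivariantAlong (fun x : ι → R ↦ x i) v := by
  intro x t
  simp [hv]

open Classical in
/-- A coordinate hyperplane is parametrized by the remaining coordinates. -/
noncomputable def coordinateHyperplaneHomeomorph {Y : Type*} [TopologicalSpace Y] (i : ι) (c : Y) :
    {x : ι → Y | x i = c} ≃ₜ ({j // j ≠ i} → Y) where
  toFun x j := x.1 j
  invFun y := ⟨(Homeomorph.piSplitAt i fun _ ↦ Y).symm (c, y), by simp⟩
  left_inv := by
    rintro ⟨x, rfl⟩
    exact Subtype.ext ((Homeomorph.piSplitAt i fun _ ↦ Y).symm_apply_apply x)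
  right_inv y := congrArg Prod.snd ((Homeomorph.piSplitAt i fun _ ↦ Y).apply_symm_apply (c, y))
  continuous_toFun := continuous_pi fun j ↦ (continuous_apply j.1).comp continuous_subtype_val
  continuous_invFun := by fun_prop

lemma continuous_sInf_image {L : Type*} [ConditionallyCompleteLinearOrder L] [TopologicalSpace L]
    [ContinuousInf L] {I : Finset ι} (hI : I.Nonempty) :
    Continuous fun x : ι → L ↦ sInf (x '' I) := by
  simp only [← Finset.inf'_eq_csInf_image I hI]
  exact Continuous.finset_inf'_apply hI fun i _ ↦ continuous_apply i

lemma sInf_image_add_const {L : Type*} [ConditionallyCompleteLinearOrder L] [AddGroup L]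
    [AddRightMono L] {I : Finset ι} (hI : I.Nonempty) (x : ι → L) (t : L) :
    sInf ((fun i ↦ x i + t) '' I) = sInf (x '' I) + t := by
  simp only [← Finset.inf'_eq_csInf_image I hI]
  exact (map_finset_inf' (OrderIso.addRight t) hI x).symm

/-- The difference of the minima of `x` over `I` and over `J`; for `J = Iᶜ` its sign decides on
which side of the boundary of the tropical halfspace with sectors `I` the point `x` lies. The minima
are infima of sets of reals, so `I` and `J` have to be nonempty for this to be meaningful. -/
noncomputable def minDifference (I J : Finset ι) (x : ι → ℝ) : ℝ :=
  sInf (x '' I) - sInf (x '' J)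

lemma continuous_minDifference {I J : Finset ι} (hI : I.Nonempty) (hJ : J.Nonempty) :
    Continuous (minDifference I J) :=
  (continuous_sInf_image hI).sub (continuous_sInf_image hJ)

lemma isEquivariantAlong_minDifference {I J : Finset ι} (hI : I.Nonempty) (hIJ : Disjoint I J) :
    IsEquivariantAlong (minDifference I J) (Set.indicator I 1) := by
  intro x t
  have image_I : (x + t • Set.indicator I 1) '' I = (fun i ↦ x i + t) '' I :=
    Set.image_congr fun i hi ↦ by simp [Set.indicator_of_mem hi]
  have image_J : (x + t • Set.indicator I 1) '' J = x '' J :=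
    Set.image_congr fun j hj ↦ by
      have hjI : j ∉ (I : Set ι) := Finset.disjoint_right.mp hIJ hj
      simp [Set.indicator_of_notMem hjI]
  rw [minDifference, image_I, image_J, sInf_image_add_const hI, add_sub_right_comm, minDifference]

end Coordinates

theorem stmt_12_general {ι : Type*} {I J : Finset ι} {i₀ : ι} (hi₀ : i₀ ∈ I) (hJ : J.Nonempty)
    (hIJ : Disjoint I J) (f : (ι → ℝ) → ℝ)
    (hf : ∀ x, f x = sInf ((fun i => x i) '' (I : Set ι)) - sInf ((fun k => x k) '' (J : Set ι)))
    (U W : Set (ι → ℝ)) (hU : U = {x | f x < 0})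
    (hW : W = {x | sInf ((fun i => x i) '' (I : Set ι)) =
                   sInf ((fun k => x k) '' (J : Set ι))}) :
    frontier U = W ∧
    Wᶜ = U ∪ {x | 0 < f x} ∧
    U.Nonempty ∧ {x | 0 < f x}.Nonempty ∧
    IsOpen U ∧ IsOpen {x | 0 < f x} ∧
    IsConnected U ∧ IsConnected {x | 0 < f x} ∧
    Disjoint U {x | 0 < f x} ∧
    Nonempty (W ≃ₜ ({i // i ≠ i₀} → ℝ)) := by
  obtain rfl : f = minDifference I J := funext hf
  obtain rfl : W = {x | minDifference I J x = 0} := by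
    simp only [hW, minDifference, sub_eq_zero]
  subst hU
  have hcont : Continuous (minDifference I J) := continuous_minDifference ⟨i₀, hi₀⟩ hJ
  have hequiv := isEquivariantAlong_minDifference ⟨i₀, hi₀⟩ hIJ
  have hneg : IsConnected {x | minDifference I J x < 0} :=
    hequiv.isConnected_preimage hcont isConnected_Iio
  have hpos : IsConnected {x | 0 < minDifference I J x} :=
    hequiv.isConnected_preimage hcont isConnected_Ioi
  have hcoord : IsEquivariantAlong (fun x : ι → ℝ ↦ x i₀) (Set.indicator I 1) :=
    isEquivariantAlong_apply (Set.indicator_of_mem (Finset.mem_coe.mpr hi₀) 1)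
  refine ⟨hequiv.frontier_setOf_lt hcont 0, ?_, hneg.nonempty, hpos.nonempty,
    isOpen_lt hcont continuous_const, isOpen_lt continuous_const hcont, hneg, hpos, ?_, ?_⟩
  · ext x
    exact ne_iff_lt_or_gt
  · exact Set.disjoint_left.mpr fun x (hx : minDifference I J x < 0) ↦ hx.not_gt
  · exact ⟨(hequiv.levelSetHomeomorph hcoord hcont (continuous_apply i₀) 0 0).trans
      (coordinateHyperplaneHomeomorph i₀ 0)⟩

theorem stmt_12 {d : ℕ} (hd : 2 ≤ d) (I : Finset (Fin d))
    (hI : I.Nonempty) (hI' : I ≠ Finset.univ)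
    (f : (Fin d → ℝ) → ℝ)
    (hf : ∀ x, f x = sInf ((fun i => x i) '' (I : Set (Fin d))) -
                    sInf ((fun k => x k) '' ((I : Set (Fin d))ᶜ)))
    (U W : Set (Fin d → ℝ))
    (hU : U = {x | f x < 0})
    (hW : W = {x | sInf ((fun i => x i) '' (I : Set (Fin d))) =
                   sInf ((fun k => x k) '' ((I : Set (Fin d))ᶜ))}) :
    frontier U = W ∧
    Wᶜ = U ∪ {x | 0 < f x} ∧
    U.Nonempty ∧ {x | 0 < f x}.Nonempty ∧
    IsOpen U ∧ IsOpen {x | 0 < f x} ∧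
    IsConnected U ∧ IsConnected {x | 0 < f x} ∧
    Disjoint U {x | 0 < f x} ∧
    Nonempty (W ≃ₜ (Fin (d - 1) → ℝ)) := by
  obtain ⟨i₀, hi₀⟩ := hI
  have hIc : Iᶜ.Nonempty := by rwa [← Finset.compl_ne_univ_iff_nonempty, compl_compl]
  simp only [← Finset.coe_compl] at hf hW
  obtain ⟨hfrontier, hcompl, hneg, hpos, hneg_open, hpos_open, hneg_conn, hpos_conn, hdisj, ⟨e⟩⟩ :=
    stmt_12_general hi₀ hIc disjoint_compl_right f hf U W hU hW
  have reindex : {i // i ≠ i₀} ≃ Fin (d - 1) := Fintype.equivOfCardEq (by simp)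
  exact ⟨hfrontier, hcompl, hneg, hpos, hneg_open, hpos_open, hneg_conn, hpos_conn, hdisj,
    ⟨e.trans (Homeomorph.piCongrLeft (Y := fun _ ↦ ℝ) reindex)⟩⟩
end
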